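/- Let 0 < a_1 < a_2 and assume that g(r;a_i) > 0 for all r ∈ (0,∞) and i = 1,2. If J(r;a_1) ≥ 0 for all r ∈ (0,∞), then the quotient q(r) = g(r;a_2)/g(r;a_1) satisfies q'(r) < 0 for every r ∈ (0,∞). -/

import Mathlib

/-!
For a positive profile put `b(r) = 1 + (N-1)/r`, `σ = 1/(p-1)`, `m = p/(p-1) = σ + 1`. The equation
becomes the system `g' = f - b g`, `f' = -g^σ`, and `q = g₂/g₁` has the sign of its derivative
governed by the Wronskian `V = ρ (f₂ g₁ - f₁ g₂)`, since `q' = V / (ρ g₁²)`.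

* `V(0) = 0` and `V' = ρ (g₂ g₁^σ - g₁ g₂^σ)`, which is negative where `q > 1` because `σ > 1`.
  Hence `V(r) < 0` as soon as `q > 1` on `(0, r)` (`V_neg`). As `g(r) / r → a / N`, one has
  `q → a₂/a₁ > 1` at the origin, so `V < 0` near `0`.
* The coefficients of `J` are chosen such that `J' = G g²` with `G` independent of the
  solution (`hasDerivAt_J0`), so `X = q² J₁ - J₂` satisfies `X' = 2 q q' J₁`; also `X → 0` at `0`
  (`tendsto_J0`).

Suppose `r₀` is the first zero of `V`. On `(0, r₀)` one has `q' < 0`, hence `X' ≤ 0` and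
`X(r₀) ≤ 0`. At `r₀` the relations `f₂ = q f₁`, `g₂ = q g₁` reduce `X(r₀)` to
`((p-1)/p) α g₁^m (q² - q^m)`, so `q(r₀) ≥ 1` because `m > 2`. Then `q > 1` on `(0, r₀)`, which
forces `V(r₀) < 0`, a contradiction.
-/

open Real Set Filter MeasureTheory

/-- `f` is a solution of the profile equation with parameter `a`:
`f` is C¹ on `[0,∞)` with derivative `f'`, the map `r ↦ |f'(r)|^{p-2} f'(r)` is C¹ on `[0,∞)`
with derivative `F'`, the ODE
`(|f'|^{p-2}f')'(r) + ((N-1)/r)(|f'|^{p-2}f')(r) + f(r) - |f'(r)|^{p-1} = 0` holds for `r > 0`,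
and `f 0 = a`, `f' 0 = 0`. -/
def IsProfileSol (N : ℕ) (p a : ℝ) (f f' F' : ℝ → ℝ) : Prop :=
  (∀ r ∈ Ici (0:ℝ), HasDerivWithinAt f (f' r) (Ici 0) r) ∧
  ContinuousOn f' (Ici 0) ∧
  (∀ r ∈ Ici (0:ℝ), HasDerivWithinAt (fun s => |f' s| ^ (p - 2) * f' s) (F' r) (Ici 0) r) ∧
  ContinuousOn F' (Ici 0) ∧
  (∀ r, 0 < r →
    F' r + (((N : ℝ) - 1) / r) * (|f' r| ^ (p - 2) * f' r) + f r - |f' r| ^ (p - 1) = 0) ∧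
  f 0 = a ∧ f' 0 = 0

/-- `g(r;a) = -|f'(r;a)|^{p-2} f'(r;a)`. -/
noncomputable def gFun (p : ℝ) (f' : ℝ → ℝ) (r : ℝ) : ℝ := -(|f' r| ^ (p - 2) * f' r)

/-- `ρ(r) = r^{N-1} e^r`. -/
noncomputable def rho (N : ℕ) (r : ℝ) : ℝ := r ^ (N - 1) * Real.exp r

/-- the derivative of `ρ`. -/
noncomputable def rho' (N : ℕ) (r : ℝ) : ℝ :=
  (((N : ℝ) - 1) * r ^ (N - 2) + r ^ (N - 1)) * Real.exp r

/-- `w(r;a) = ρ(r) g(r;a)`. -/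
noncomputable def wFun (N : ℕ) (p : ℝ) (f' : ℝ → ℝ) (r : ℝ) : ℝ := rho N r * gFun p f' r

/-- the derivative `w'(r;a) = ρ'(r) g(r;a) + ρ(r) g'(r;a)`, where `g' = -F'`. -/
noncomputable def wDeriv (N : ℕ) (p : ℝ) (f' F' : ℝ → ℝ) (r : ℝ) : ℝ :=
  rho' N r * gFun p f' r - rho N r * F' r

/-- `α(r) = ρ(r)^{2p/(3p-2)}`. -/
noncomputable def alphaFun (N : ℕ) (p r : ℝ) : ℝ := rho N r ^ (2 * p / (3 * p - 2))

/-- `β(r) = (2(p-1)/(3p-2))(1 + (N-1)/r) α(r)`. -/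
noncomputable def betaFun (N : ℕ) (p r : ℝ) : ℝ :=
  (2 * (p - 1) / (3 * p - 2)) * (1 + ((N : ℝ) - 1) / r) * alphaFun N p r

/-- `γ(r)`. -/
noncomputable def gammaFun (N : ℕ) (p r : ℝ) : ℝ :=
  -(2 * (p - 1) * (2 - p) / (3 * p - 2) ^ 2
      + (4 * ((N : ℝ) - 1) * (p - 1) * (2 - p) / (3 * p - 2) ^ 2) * (1 / r)
      + (((N : ℝ) - 1) / (3 * p - 2) ^ 2)
          * (p * (3 * p - 2) + 2 * ((N : ℝ) - 1) * (p - 1) * (2 - p)) * (1 / r ^ 2))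
    * alphaFun N p r

/-- The Pohozaev functional
`J(r;a) = (1/2)α g'² + β g g' + (1/2)γ g² + ((p-1)/p) δ g^{p/(p-1)}`, with `δ = α`, `g' = -F'`. -/
noncomputable def Jfun (N : ℕ) (p : ℝ) (f' F' : ℝ → ℝ) (r : ℝ) : ℝ :=
  (1 / 2) * alphaFun N p r * (-(F' r)) ^ 2 + betaFun N p r * gFun p f' r * (-(F' r))
    + (1 / 2) * gammaFun N p r * gFun p f' r ^ 2
    + ((p - 1) / p) * alphaFun N p r * gFun p f' r ^ (p / (p - 1))

/-! ### Reduction to a first-order system -/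

/-- The drift coefficient `b(r) = 1 + (N-1)/r = ρ'(r)/ρ(r)`. -/
noncomputable def drift (N : ℕ) (r : ℝ) : ℝ := 1 + ((N : ℝ) - 1) / r

/-- What is used of a positive solution, in terms of the pair `(f, g)`. The limits at `0` are
one-sided; `g(r) / r → a / N` and `g'(r) = f(r) - b(r) g(r) → a / N`. -/
structure PosProfile (N : ℕ) (p a : ℝ) (f g : ℝ → ℝ) : Prop where
  pos : ∀ r, 0 < r → 0 < g r
  derivf : ∀ r, 0 < r → HasDerivAt f (-(g r ^ (1 / (p - 1)))) r
  derivg : ∀ r, 0 < r → HasDerivAt g (f r - drift N r * g r) r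
  contf : ContinuousOn f (Ici 0)
  contg : ContinuousOn g (Ici 0)
  g_zero : g 0 = 0
  limg : Tendsto (fun r => g r / r) (nhdsWithin 0 (Ioi 0)) (nhds (a / N))
  limu : Tendsto (fun r => f r - drift N r * g r) (nhdsWithin 0 (Ioi 0)) (nhds (a / N))

/-- The functional `J` with `g'` replaced by `f - b g` and the coefficients `β`, `γ` rewritten in
terms of `b`. -/
noncomputable def J0 (N : ℕ) (p : ℝ) (f g : ℝ → ℝ) (r : ℝ) : ℝ :=
  alphaFun N p r * ((1 / 2) * (f r - drift N r * g r) ^ 2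
    + (2 * (p - 1) / (3 * p - 2)) * drift N r * g r * (f r - drift N r * g r)
    + (1 / 2) * (-(p / (3 * p - 2)) * (((N : ℝ) - 1) / r ^ 2)
        - 2 * (p - 1) * (2 - p) / (3 * p - 2) ^ 2 * drift N r ^ 2) * g r ^ 2
    + ((p - 1) / p) * g r ^ (p / (p - 1)))

lemma gFun_facts {p : ℝ} (hp : 1 < p) {f' : ℝ → ℝ} {r : ℝ} (h : 0 < gFun p f' r) :
    |f' r| ^ (p - 1) = gFun p f' r ∧ f' r = -(gFun p f' r ^ (1 / (p - 1))) := by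
  have hneg : f' r < 0 := by
    by_contra hc
    have h1 := mul_nonneg (Real.rpow_nonneg (abs_nonneg (f' r)) (p - 2)) (not_lt.mp hc)
    unfold gFun at h
    linarith
  have habs : |f' r| = -f' r := abs_of_neg hneg
  have hpos : 0 < |f' r| := abs_pos.mpr hneg.ne
  have h1 : |f' r| ^ (p - 1) = gFun p f' r := by
    have : p - 1 = (p - 2) + 1 := by ring
    rw [this, Real.rpow_add hpos, Real.rpow_one, gFun]
    nth_rewrite 2 [habs]
    ring
  refine ⟨h1, ?_⟩
  rw [← h1, ← Real.rpow_mul hpos.le, mul_one_div_cancel (by linarith), Real.rpow_one, habs]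
  ring

lemma neg_F'_eq {N : ℕ} {p a : ℝ} (hp : 1 < p) {f f' F' : ℝ → ℝ}
    (hf : IsProfileSol N p a f f' F') (hg : ∀ r, 0 < r → 0 < gFun p f' r) {r : ℝ} (hr : 0 < r) :
    -(F' r) = f r - drift N r * gFun p f' r := by
  have h1 := hf.2.2.2.2.1 r hr
  rw [(gFun_facts hp (hg r hr)).1] at h1
  have h2 : |f' r| ^ (p - 2) * f' r = -gFun p f' r := by unfold gFun; ring
  rw [h2] at h1
  unfold drift
  linear_combination -h1

lemma posProfile {N : ℕ} (hN : 2 ≤ N) {p a : ℝ} (hp : 1 < p) {f f' F' : ℝ → ℝ}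
    (hf : IsProfileSol N p a f f' F') (hg : ∀ r, 0 < r → 0 < gFun p f' r) :
    PosProfile N p a f (gFun p f') := by
  obtain ⟨h1, h2, h3, h4, h5, h6, h7⟩ := id hf
  have hgd : ∀ r ∈ Ici (0:ℝ), HasDerivWithinAt (gFun p f') (-(F' r)) (Ici 0) r :=
    fun r hr => (h3 r hr).neg
  have hg0 : gFun p f' 0 = 0 := by simp [gFun, h7]
  have cf : ContinuousOn f (Ici 0) := fun r hr => (h1 r hr).continuousWithinAt
  have cg : ContinuousOn (gFun p f') (Ici 0) := fun r hr => (hgd r hr).continuousWithinAt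
  have hs : Tendsto (fun r => gFun p f' r / r) (nhdsWithin 0 (Ioi 0)) (nhds (-(F' 0))) := by
    have h := (hasDerivWithinAt_iff_tendsto_slope.mp (hgd 0 self_mem_Ici))
    have he : Ici (0:ℝ) \ {0} = Ioi 0 := by ext x; simp [lt_iff_le_and_ne, eq_comm]
    rw [he] at h
    refine h.congr fun r => ?_
    simp [slope_def_field, hg0]
  have lf : Tendsto f (nhdsWithin 0 (Ioi 0)) (nhds a) := by
    have := (cf 0 self_mem_Ici).mono Ioi_subset_Ici_self
    simpa [ContinuousWithinAt, h6] using this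
  have lg : Tendsto (gFun p f') (nhdsWithin 0 (Ioi 0)) (nhds 0) := by
    have := (cg 0 self_mem_Ici).mono Ioi_subset_Ici_self
    simpa [ContinuousWithinAt, hg0] using this
  have lF : Tendsto (fun r => -(F' r)) (nhdsWithin 0 (Ioi 0)) (nhds (-(F' 0))) :=
    ((h4 0 self_mem_Ici).mono Ioi_subset_Ici_self).neg
  have lu : Tendsto (fun r => f r - drift N r * gFun p f' r) (nhdsWithin 0 (Ioi 0))
      (nhds (-(F' 0))) := by
    refine lF.congr' ?_
    filter_upwards [self_mem_nhdsWithin] with r hr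
    exact neg_F'_eq hp hf hg hr
  have lu2 : Tendsto (fun r => f r - drift N r * gFun p f' r) (nhdsWithin 0 (Ioi 0))
      (nhds (a - (0 + ((N:ℝ) - 1) * -(F' 0)))) := by
    refine (lf.sub (lg.add (hs.const_mul ((N:ℝ) - 1)))).congr fun r => ?_
    unfold drift
    ring
  -- The equation at `r → 0⁺` reads `g'(0) = a - (N-1) g'(0)`.
  have hval : -(F' 0) = a / N := by
    have hu := tendsto_nhds_unique lu lu2
    have hN' : (N : ℝ) ≠ 0 := by positivity
    field_simp
    linarith
  refine ⟨hg, fun r hr => ?_, fun r hr => ?_, cf, cg, hg0, hval ▸ hs, hval ▸ lu⟩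
  · rw [← (gFun_facts hp (hg r hr)).2]
    exact (h1 r hr.le).hasDerivAt (Ici_mem_nhds hr)
  · rw [← neg_F'_eq hp hf hg hr]
    exact (hgd r hr.le).hasDerivAt (Ici_mem_nhds hr)

lemma Jfun_eq_J0 {N : ℕ} {p a : ℝ} (hp : 1 < p) {f f' F' : ℝ → ℝ}
    (hf : IsProfileSol N p a f f' F') (hg : ∀ r, 0 < r → 0 < gFun p f' r) {r : ℝ} (hr : 0 < r) :
    Jfun N p f' F' r = J0 N p f (gFun p f') r := by
  have hD : 3 * p - 2 ≠ 0 := by linarith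
  have hr' := hr.ne'
  have hγ : gammaFun N p r = (-(p / (3 * p - 2)) * (((N : ℝ) - 1) / r ^ 2)
        - 2 * (p - 1) * (2 - p) / (3 * p - 2) ^ 2 * drift N r ^ 2) * alphaFun N p r := by
    unfold gammaFun drift
    field_simp
    ring
  unfold Jfun J0
  rw [neg_F'_eq hp hf hg hr, hγ]
  unfold betaFun
  rw [show 1 + ((N : ℝ) - 1) / r = drift N r from rfl]
  ring

/-! ### The Pohozaev identity -/

lemma rho_pos (N : ℕ) {r : ℝ} (hr : 0 < r) : 0 < rho N r := by
  unfold rho; positivity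

lemma alphaFun_pos (N : ℕ) (p : ℝ) {r : ℝ} (hr : 0 < r) : 0 < alphaFun N p r :=
  Real.rpow_pos_of_pos (rho_pos N hr) _

lemma hasDerivAt_rho {N : ℕ} (hN : 2 ≤ N) {r : ℝ} (hr : 0 < r) :
    HasDerivAt (rho N) (drift N r * rho N r) r := by
  obtain ⟨M, rfl⟩ := Nat.exists_eq_add_of_le' hN
  have h := (hasDerivAt_pow (M + 1) r).mul (Real.hasDerivAt_exp r)
  refine h.congr_deriv ?_
  have hr' := hr.ne'
  simp only [drift, rho, show M + 2 - 1 = M + 1 from rfl, Nat.add_sub_cancel]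
  push_cast
  field_simp
  ring

lemma hasDerivAt_alphaFun {N : ℕ} (hN : 2 ≤ N) (p : ℝ) {r : ℝ} (hr : 0 < r) :
    HasDerivAt (alphaFun N p) (2 * p / (3 * p - 2) * drift N r * alphaFun N p r) r := by
  have hρ := rho_pos N hr
  have h := (hasDerivAt_rho hN hr).rpow_const (p := 2 * p / (3 * p - 2)) (Or.inl hρ.ne')
  refine h.congr_deriv ?_
  rw [Real.rpow_sub_one hρ.ne', alphaFun]
  field_simp

lemma hasDerivAt_drift (N : ℕ) {r : ℝ} (hr : 0 < r) :
    HasDerivAt (drift N) (-(((N : ℝ) - 1) / r ^ 2)) r := by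
  have h := ((hasDerivAt_inv hr.ne').const_mul ((N : ℝ) - 1)).const_add 1
  refine (h.congr_of_eventuallyEq (Eventually.of_forall fun x => ?_)).congr_deriv ?_
  · simp [drift, div_eq_mul_inv]
  · field_simp

/-- The coefficient `G` in the Pohozaev identity `J' = G g²`. -/
noncomputable def pohozaevG (N : ℕ) (p r : ℝ) : ℝ :=
  alphaFun N p r * (2 * (p - 1) / (3 * p - 2) * drift N r * (((N : ℝ) - 1) / r ^ 2)
    + p / (3 * p - 2) * drift N r * (-(p / (3 * p - 2)) * (((N : ℝ) - 1) / r ^ 2)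
        - 2 * (p - 1) * (2 - p) / (3 * p - 2) ^ 2 * drift N r ^ 2)
    + p / (3 * p - 2) * (((N : ℝ) - 1) / r ^ 3)
    + 2 * (p - 1) * (2 - p) / (3 * p - 2) ^ 2 * drift N r * (((N : ℝ) - 1) / r ^ 2))

/-- Pohozaev identity: the derivative of `J` involves the solution only through the factor `g²`. -/
lemma hasDerivAt_J0 {N : ℕ} (hN : 2 ≤ N) {p a : ℝ} (hp : 1 < p) {f g : ℝ → ℝ}
    (h : PosProfile N p a f g) {r : ℝ} (hr : 0 < r) :
    HasDerivAt (J0 N p f g) (pohozaevG N p r * g r ^ 2) r := by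
  have hb := hasDerivAt_drift N hr
  have hg := h.derivg r hr
  have hu := (h.derivf r hr).sub (hb.mul hg)
  have hc : HasDerivAt (fun s : ℝ => ((N : ℝ) - 1) / s ^ 2) (-(2 * (((N : ℝ) - 1) / r ^ 3))) r := by
    have := (hasDerivAt_const r ((N : ℝ) - 1)).div (hasDerivAt_pow 2 r) (by positivity)
    refine this.congr_deriv ?_
    field_simp
    push_cast
    ring
  have hm := hg.rpow_const (p := p / (p - 1)) (Or.inl (h.pos r hr).ne')
  have hA := hasDerivAt_alphaFun hN p hr
  have hJ := hA.mul (((((hu.pow 2).const_mul (1 / 2)).add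
    (((hb.const_mul (2 * (p - 1) / (3 * p - 2))).mul hg).mul hu)).add
    ((((hc.const_mul (-(p / (3 * p - 2)))).sub
      ((hb.pow 2).const_mul (2 * (p - 1) * (2 - p) / (3 * p - 2) ^ 2))).const_mul (1 / 2)).mul
        (hg.pow 2))).add (hm.const_mul ((p - 1) / p)))
  refine (hJ.congr_of_eventuallyEq (Eventually.of_forall fun x => ?_)).congr_deriv ?_
  · simp [J0]
  · have hp1 : p - 1 ≠ 0 := by linarith
    have hp0 : p ≠ 0 := by linarith
    have hD : 3 * p - 2 ≠ 0 := by linarith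
    have e1 : p / (p - 1) - 1 = 1 / (p - 1) := by field_simp; ring
    have e2 : g r ^ (p / (p - 1)) = g r * g r ^ (1 / (p - 1)) := by
      rw [show p / (p - 1) = 1 + 1 / (p - 1) by field_simp; ring, Real.rpow_add (h.pos r hr),
        Real.rpow_one]
    simp only [Pi.mul_apply, Pi.add_apply, Pi.sub_apply, Pi.pow_apply, e1, e2, pohozaevG]
    generalize g r ^ (1 / (p - 1)) = E
    generalize alphaFun N p r = A
    generalize drift N r = b
    generalize g r = y
    generalize f r = x
    have hr' := hr.ne'
    have hq : (p - 1) / p * ((x - b * y) * (p / (p - 1)) * E) = (x - b * y) * E := by field_simp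
    rw [hq]
    -- With `D = 3 p - 2` as the basic variable all denominators are atoms.
    have hpe : p - 1 = (3 * p - 2 - 1) / 3 := by ring
    have hpe2 : 2 - p = (4 - (3 * p - 2)) / 3 := by ring
    obtain ⟨D, hDe⟩ : ∃ D, D = 3 * p - 2 := ⟨_, rfl⟩
    rw [hpe, hpe2, ← hDe]
    have hp' : p = (D + 2) / 3 := by linarith
    rw [← hDe] at hD
    have hD2 : D + 2 ≠ 0 := by
      rw [hDe]
      simpa using hp0
    rw [hp']
    push_cast
    field_simp
    ring

lemma continuous_rho (N : ℕ) : Continuous (rho N) := by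
  unfold rho; fun_prop

lemma rho_zero {N : ℕ} (hN : 2 ≤ N) : rho N 0 = 0 := by
  have : N - 1 ≠ 0 := by omega
  simp [rho, this]

lemma tendsto_J0 {N : ℕ} (hN : 2 ≤ N) {p a : ℝ} (hp : 1 < p) {f g : ℝ → ℝ}
    (h : PosProfile N p a f g) :
    Tendsto (J0 N p f g) (nhdsWithin 0 (Ioi 0)) (nhds 0) := by
  have hk : 0 < 2 * p / (3 * p - 2) := div_pos (by linarith) (by linarith)
  have hm : 0 < p / (p - 1) := div_pos (by linarith) (by linarith)
  have lA : Tendsto (alphaFun N p) (nhdsWithin 0 (Ioi 0)) (nhds 0) := by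
    have := ((continuous_rho N).rpow_const (p := 2 * p / (3 * p - 2))
      (fun _ => Or.inr hk.le)).tendsto 0
    rw [rho_zero hN, Real.zero_rpow hk.ne'] at this
    exact this.mono_left nhdsWithin_le_nhds
  have lg : Tendsto g (nhdsWithin 0 (Ioi 0)) (nhds 0) := by
    have := (h.contg 0 self_mem_Ici).mono Ioi_subset_Ici_self
    simpa [ContinuousWithinAt, h.g_zero] using this
  have lm : Tendsto (fun r => g r ^ (p / (p - 1))) (nhdsWithin 0 (Ioi 0)) (nhds 0) := by
    have := lg.rpow_const (p := p / (p - 1)) (Or.inr hm.le)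
    rwa [Real.zero_rpow hm.ne'] at this
  have lb : Tendsto (fun r => drift N r * g r) (nhdsWithin 0 (Ioi 0))
      (nhds (0 + ((N : ℝ) - 1) * (a / N))) := by
    refine (lg.add (h.limg.const_mul ((N : ℝ) - 1))).congr fun r => ?_
    unfold drift
    ring
  -- Every term of the bracket in `J0` is bounded: it is a polynomial in `g'`, `b g`, `g / r`, `g^m`.
  have hlim := lA.mul (((((h.limu.pow 2).const_mul (1 / 2)).add
    ((lb.mul h.limu).const_mul (2 * (p - 1) / (3 * p - 2)))).add
    ((((h.limg.pow 2).const_mul (-(p / (3 * p - 2)) * ((N : ℝ) - 1))).sub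
      ((lb.pow 2).const_mul (2 * (p - 1) * (2 - p) / (3 * p - 2) ^ 2))).const_mul (1 / 2))).add
        (lm.const_mul ((p - 1) / p)))
  rw [zero_mul] at hlim
  refine hlim.congr fun r => ?_
  unfold J0
  ring

/-! ### Comparison of two solutions -/

/-- The Wronskian `V = ρ (f₂ g₁ - f₁ g₂) = ρ (g₂' g₁ - g₂ g₁')`. -/
noncomputable def wronsk (N : ℕ) (f₁ g₁ f₂ g₂ : ℝ → ℝ) (r : ℝ) : ℝ :=
  rho N r * (f₂ r * g₁ r - f₁ r * g₂ r)

section Pair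

variable {N : ℕ} {p a₁ a₂ : ℝ} {f₁ g₁ f₂ g₂ : ℝ → ℝ}

lemma hasDerivAt_wronsk (hN : 2 ≤ N) (h₁ : PosProfile N p a₁ f₁ g₁)
    (h₂ : PosProfile N p a₂ f₂ g₂) {r : ℝ} (hr : 0 < r) :
    HasDerivAt (wronsk N f₁ g₁ f₂ g₂)
      (rho N r * (g₂ r * g₁ r ^ (1 / (p - 1)) - g₁ r * g₂ r ^ (1 / (p - 1)))) r := by
  have h := (hasDerivAt_rho hN hr).mul (((h₂.derivf r hr).mul (h₁.derivg r hr)).sub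
    ((h₁.derivf r hr).mul (h₂.derivg r hr)))
  refine h.congr_deriv ?_
  simp only [Pi.mul_apply, Pi.sub_apply]
  ring

lemma continuousOn_wronsk (h₁ : PosProfile N p a₁ f₁ g₁) (h₂ : PosProfile N p a₂ f₂ g₂) :
    ContinuousOn (wronsk N f₁ g₁ f₂ g₂) (Ici 0) :=
  (continuous_rho N).continuousOn.mul ((h₂.contf.mul h₁.contg).sub (h₁.contf.mul h₂.contg))

lemma V_neg (hN : 2 ≤ N) (hp1 : 1 < p) (hp2 : p < 2) (h₁ : PosProfile N p a₁ f₁ g₁)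
    (h₂ : PosProfile N p a₂ f₂ g₂) {r : ℝ} (hr : 0 < r)
    (hlt : ∀ s, 0 < s → s < r → g₁ s < g₂ s) : wronsk N f₁ g₁ f₂ g₂ r < 0 := by
  have hanti : StrictAntiOn (wronsk N f₁ g₁ f₂ g₂) (Icc 0 r) := by
    refine strictAntiOn_of_deriv_neg (convex_Icc 0 r)
      ((continuousOn_wronsk h₁ h₂).mono Icc_subset_Ici_self) fun s hs => ?_
    rw [interior_Icc] at hs
    rw [(hasDerivAt_wronsk hN h₁ h₂ hs.1).deriv]
    refine mul_neg_of_pos_of_neg (rho_pos N hs.1) ?_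
    have p1 := h₁.pos s hs.1
    have p2 := h₂.pos s hs.1
    have hτ : 0 < 1 / (p - 1) - 1 := by
      have : 1 < 1 / (p - 1) := by rw [lt_div_iff₀ (by linarith)]; linarith
      linarith
    have e : ∀ x : ℝ, 0 < x → x ^ (1 / (p - 1)) = x * x ^ (1 / (p - 1) - 1) := fun x hx => by
      rw [Real.rpow_sub_one hx.ne']; field_simp
    have := Real.rpow_lt_rpow p1.le (hlt s hs.1 hs.2) hτ
    rw [e _ p1, e _ p2]
    nlinarith [mul_pos (mul_pos p1 p2) (sub_pos.mpr this)]
  have := hanti (left_mem_Icc.mpr hr.le) (right_mem_Icc.mpr hr.le) hr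
  simpa [wronsk, h₁.g_zero, h₂.g_zero] using this

lemma hasDerivAt_quot (h₁ : PosProfile N p a₁ f₁ g₁) (h₂ : PosProfile N p a₂ f₂ g₂) {r : ℝ}
    (hr : 0 < r) : HasDerivAt (fun s => g₂ s / g₁ s)
      (wronsk N f₁ g₁ f₂ g₂ r / (rho N r * g₁ r ^ 2)) r := by
  have p1 := (h₁.pos r hr).ne'
  have hρ := (rho_pos N hr).ne'
  refine ((h₂.derivg r hr).div (h₁.derivg r hr) p1).congr_deriv ?_
  unfold wronsk
  field_simp
  ring

lemma tendsto_quot (hN : 2 ≤ N) (ha₁ : 0 < a₁) (h₁ : PosProfile N p a₁ f₁ g₁)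
    (h₂ : PosProfile N p a₂ f₂ g₂) :
    Tendsto (fun s => g₂ s / g₁ s) (nhdsWithin 0 (Ioi 0)) (nhds (a₂ / a₁)) := by
  have hN' : (N : ℝ) ≠ 0 := by positivity
  have h := h₂.limg.div h₁.limg (by positivity)
  rw [div_div_div_cancel_right₀ hN'] at h
  refine h.congr' ?_
  filter_upwards [self_mem_nhdsWithin] with r hr
  exact div_div_div_cancel_right₀ (ne_of_gt hr) _ _

/-- At a first zero `r₀` of the Wronskian the quotient is at least `1`, by monotonicity of
`X = q² J₁ - J₂` on `(0, r₀]`. -/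
lemma le_of_first_zero (hN : 2 ≤ N) (hp1 : 1 < p) (hp2 : p < 2) (ha₁ : 0 < a₁)
    (h₁ : PosProfile N p a₁ f₁ g₁) (h₂ : PosProfile N p a₂ f₂ g₂)
    (hJ : ∀ r, 0 < r → 0 ≤ J0 N p f₁ g₁ r) {r₀ : ℝ} (hr₀ : 0 < r₀)
    (hV : ∀ s, 0 < s → s < r₀ → wronsk N f₁ g₁ f₂ g₂ s < 0)
    (hV0 : wronsk N f₁ g₁ f₂ g₂ r₀ = 0) : g₁ r₀ ≤ g₂ r₀ := by
  set X : ℝ → ℝ := fun s => (g₂ s / g₁ s) ^ 2 * J0 N p f₁ g₁ s - J0 N p f₂ g₂ s with hX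
  have dX : ∀ s, 0 < s → HasDerivAt X (2 * (g₂ s / g₁ s) *
      (wronsk N f₁ g₁ f₂ g₂ s / (rho N s * g₁ s ^ 2)) * J0 N p f₁ g₁ s) s := fun s hs => by
    have h := (((hasDerivAt_quot h₁ h₂ hs).pow 2).mul (hasDerivAt_J0 hN hp1 h₁ hs)).sub
      (hasDerivAt_J0 hN hp1 h₂ hs)
    refine h.congr_deriv ?_
    have p1 := (h₁.pos s hs).ne'
    have : (g₂ s / g₁ s) ^ 2 * g₁ s ^ 2 = g₂ s ^ 2 := by field_simp
    simp only [Pi.pow_apply]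
    push_cast
    linear_combination pohozaevG N p s * this
  have hanti : AntitoneOn X (Ioc 0 r₀) := by
    refine antitoneOn_of_deriv_nonpos (convex_Ioc 0 r₀)
      (fun s hs => (dX s hs.1).continuousAt.continuousWithinAt)
      (fun s hs => ?_) fun s hs => ?_
    · rw [interior_Ioc] at hs
      exact (dX s hs.1).differentiableAt.differentiableWithinAt
    · rw [interior_Ioc] at hs
      rw [(dX s hs.1).deriv]
      have p1 := h₁.pos s hs.1
      have p2 := h₂.pos s hs.1
      refine mul_nonpos_of_nonpos_of_nonneg ?_ (hJ s hs.1)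
      refine mul_nonpos_of_nonneg_of_nonpos (by positivity) ?_
      exact div_nonpos_of_nonpos_of_nonneg (hV s hs.1 hs.2).le
        (mul_nonneg (rho_pos N hs.1).le (sq_nonneg _))
  have limX : Tendsto X (nhdsWithin 0 (Ioi 0)) (nhds 0) := by
    have := (((tendsto_quot hN ha₁ h₁ h₂).pow 2).mul (tendsto_J0 hN hp1 h₁)).sub
      (tendsto_J0 hN hp1 h₂)
    simpa using this
  have hX0 : X r₀ ≤ 0 := by
    refine ge_of_tendsto limX ?_
    filter_upwards [Ioc_mem_nhdsGT hr₀] with s hs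
    exact hanti hs (right_mem_Ioc.mpr hr₀) hs.2
  have p1 := h₁.pos r₀ hr₀
  have p2 := h₂.pos r₀ hr₀
  have hA := alphaFun_pos N p hr₀
  obtain ⟨q, hq⟩ : ∃ q, q = g₂ r₀ / g₁ r₀ := ⟨_, rfl⟩
  have hqpos : 0 < q := hq ▸ div_pos p2 p1
  have eg : g₂ r₀ = q * g₁ r₀ := by rw [hq]; field_simp
  have ef : f₂ r₀ = q * f₁ r₀ := by
    have h0 := (mul_eq_zero.mp hV0).resolve_left (rho_pos N hr₀).ne'
    rw [eg] at h0
    exact mul_right_cancel₀ p1.ne' (by linear_combination h0)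
  by_contra hc
  have hq1 : q < 1 := by rw [hq, div_lt_one p1]; exact not_le.mp hc
  have hXv : X r₀ = alphaFun N p r₀ * ((p - 1) / p) * g₁ r₀ ^ (p / (p - 1)) *
      (q ^ 2 - q ^ (p / (p - 1))) := by
    simp only [hX, J0, ← hq]
    rw [ef, eg, Real.mul_rpow hqpos.le p1.le]
    ring
  have hm : (2 : ℝ) < p / (p - 1) := by rw [lt_div_iff₀ (by linarith)]; linarith
  have hpow : q ^ (p / (p - 1)) < q ^ 2 := by
    rw [← Real.rpow_two]
    exact Real.rpow_lt_rpow_of_exponent_gt hqpos hq1 hm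
  have hpp : 0 < (p - 1) / p := div_pos (by linarith) (by linarith)
  have : 0 < X r₀ := by
    rw [hXv]
    exact mul_pos (mul_pos (mul_pos hA hpp) (Real.rpow_pos_of_pos p1 _)) (sub_pos.mpr hpow)
  linarith

lemma wronsk_neg (hN : 2 ≤ N) (hp1 : 1 < p) (hp2 : p < 2) (ha₁ : 0 < a₁) (ha₁₂ : a₁ < a₂)
    (h₁ : PosProfile N p a₁ f₁ g₁) (h₂ : PosProfile N p a₂ f₂ g₂)
    (hJ : ∀ r, 0 < r → 0 ≤ J0 N p f₁ g₁ r) {r : ℝ} (hr : 0 < r) :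
    wronsk N f₁ g₁ f₂ g₂ r < 0 := by
  have hnear : ∀ᶠ s in nhdsWithin 0 (Ioi 0), 1 < g₂ s / g₁ s :=
    (tendsto_quot hN ha₁ h₁ h₂).eventually_const_lt ((one_lt_div ha₁).mpr ha₁₂)
  obtain ⟨ε, hε, hsub⟩ := mem_nhdsGT_iff_exists_Ioo_subset.mp hnear
  have hε0 : (0 : ℝ) < ε := hε
  have hsmall : ∀ s, 0 < s → s < ε → wronsk N f₁ g₁ f₂ g₂ s < 0 := fun s hs hse =>
    V_neg hN hp1 hp2 h₁ h₂ hs fun t ht hts =>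
      (one_lt_div (h₁.pos t ht)).mp (hsub ⟨ht, hts.trans hse⟩)
  by_contra hc
  rw [not_lt] at hc
  -- The first point where the Wronskian is nonnegative is a minimum of a compact set, which
  -- stays away from `0`.
  have hrε : ε ≤ r := by
    by_contra h
    exact absurd (hsmall r hr (not_le.mp h)) (not_lt.mpr hc)
  have hcont : ContinuousOn (wronsk N f₁ g₁ f₂ g₂) (Icc ε r) :=
    (continuousOn_wronsk h₁ h₂).mono fun s hs => hε0.le.trans hs.1
  have hcpt : IsCompact (Icc ε r ∩ wronsk N f₁ g₁ f₂ g₂ ⁻¹' Ici 0) :=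
    isCompact_Icc.of_isClosed_subset (hcont.preimage_isClosed_of_isClosed isClosed_Icc isClosed_Ici)
      inter_subset_left
  obtain ⟨r₀, ⟨hr₀, hVr₀⟩, hmin⟩ := hcpt.exists_isLeast ⟨r, ⟨hrε, le_rfl⟩, hc⟩
  have hr₀pos : 0 < r₀ := hε0.trans_le hr₀.1
  have hbefore : ∀ s, 0 < s → s < r₀ → wronsk N f₁ g₁ f₂ g₂ s < 0 := fun s hs hsr => by
    rcases lt_or_ge s ε with h | h
    · exact hsmall s hs h
    · by_contra hV
      exact absurd (hmin ⟨⟨h, hsr.le.trans hr₀.2⟩, not_lt.mp hV⟩) (not_le.mpr hsr)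
  have hV0 : wronsk N f₁ g₁ f₂ g₂ r₀ = 0 := by
    refine le_antisymm ?_ hVr₀
    have ht : Tendsto (wronsk N f₁ g₁ f₂ g₂) (nhdsWithin r₀ (Iio r₀))
        (nhds (wronsk N f₁ g₁ f₂ g₂ r₀)) :=
      (hasDerivAt_wronsk hN h₁ h₂ hr₀pos).continuousAt.mono_left nhdsWithin_le_nhds
    refine le_of_tendsto ht ?_
    filter_upwards [Ioo_mem_nhdsLT hr₀pos] with s hs
    exact (hbefore s hs.1 hs.2).le
  have hq0 := le_of_first_zero hN hp1 hp2 ha₁ h₁ h₂ hJ hr₀pos hbefore hV0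
  have hqanti : StrictAntiOn (fun s => g₂ s / g₁ s) (Ioc 0 r₀) := by
    refine strictAntiOn_of_deriv_neg (convex_Ioc 0 r₀)
      (fun s hs => (hasDerivAt_quot h₁ h₂ hs.1).continuousAt.continuousWithinAt) fun s hs => ?_
    rw [interior_Ioc] at hs
    rw [(hasDerivAt_quot h₁ h₂ hs.1).deriv]
    exact div_neg_of_neg_of_pos (hbefore s hs.1 hs.2)
      (mul_pos (rho_pos N hs.1) (pow_pos (h₁.pos s hs.1) 2))
  refine (V_neg hN hp1 hp2 h₁ h₂ hr₀pos fun s hs hsr => ?_).ne hV0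
  have h1 : g₂ r₀ / g₁ r₀ < g₂ s / g₁ s :=
    hqanti ⟨hs, hsr.le⟩ (right_mem_Ioc.mpr hr₀pos) hsr
  have h2 : 1 ≤ g₂ r₀ / g₁ r₀ := (one_le_div (h₁.pos r₀ hr₀pos)).mpr hq0
  exact (one_lt_div (h₁.pos s hs)).mp (h2.trans_lt h1)

end Pair

/-- if `0 < a₁ < a₂`, `g(·;a₁), g(·;a₂) > 0` on `(0,∞)` and `J(·;a₁) ≥ 0`
on `(0,∞)`, then the quotient `q = g(·;a₂)/g(·;a₁)` has negative derivative on `(0,∞)`. -/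
theorem stmt18 (N : ℕ) (hN : 2 ≤ N) (p : ℝ)
    (hp1 : 2 * (N : ℝ) / ((N : ℝ) + 1) < p) (hp2 : p < 2)
    (a₁ a₂ : ℝ) (ha₁ : 0 < a₁) (ha₁₂ : a₁ < a₂)
    (f₁ f₁' F₁' f₂ f₂' F₂' : ℝ → ℝ)
    (hf₁ : IsProfileSol N p a₁ f₁ f₁' F₁') (hf₂ : IsProfileSol N p a₂ f₂ f₂' F₂')
    (hg₁ : ∀ r, 0 < r → 0 < gFun p f₁' r) (hg₂ : ∀ r, 0 < r → 0 < gFun p f₂' r)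
    (hJ : ∀ r, 0 < r → 0 ≤ Jfun N p f₁' F₁' r) :
    ∃ q' : ℝ → ℝ, ∀ r, 0 < r →
      HasDerivAt (fun s => gFun p f₂' s / gFun p f₁' s) (q' r) r ∧ q' r < 0 := by
  have hp : 1 < p := by
    have hN' : (2 : ℝ) ≤ N := by exact_mod_cast hN
    have : (1 : ℝ) ≤ 2 * (N : ℝ) / ((N : ℝ) + 1) := by
      rw [le_div_iff₀ (by linarith)]; linarith
    linarith
  have h₁ := posProfile hN hp hf₁ hg₁
  have h₂ := posProfile hN hp hf₂ hg₂
  have hJ' : ∀ r, 0 < r → 0 ≤ J0 N p f₁ (gFun p f₁') r := fun r hr =>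
    Jfun_eq_J0 hp hf₁ hg₁ hr ▸ hJ r hr
  refine ⟨_, fun r hr => ⟨hasDerivAt_quot h₁ h₂ hr, ?_⟩⟩
  exact div_neg_of_neg_of_pos (wronsk_neg hN hp hp2 ha₁ ha₁₂ h₁ h₂ hJ' hr)
    (mul_pos (rho_pos N hr) (pow_pos (hg₁ r hr) 2))
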